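/- For every m, n : ℕ and every function f : (Fin m → Bool) → (Fin n → Bool), there exists a finite list of permutations of the set V = (Fin (m+n) → Bool), each of which is one of the following bijective gates: a NOT gate v ↦ Function.update v i (¬ v i) for some coordinate i; a controlled-not (c-not) gate v ↦ Function.update v j (xor (v i) (v j)) for some coordinates i ≠ j; a doubly-controlled-not (cc-not, Toffoli) gate v ↦ Function.update v k (xor (v i ∧ v j) (v k)) for some pairwise distinct coordinates i, j, k; or a wire transposition v ↦ v ∘ (Equiv.swap i j) for some coordinates i ≠ j; such that the composite π of the list satisfies: for every x : Fin m → Bool, letting u : Fin (m+n) → Bool be the vector whose first m coordinates are x and whose last n coordinates are false (i.e., u = Fin.append x (fun _ => false)), the vector π(u) has its first n coordinates equal to f(x) and its last m coordinates equal to x. -/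

import Mathlib

/-!
Write `V = {0,1}^N` with `N = m + n`, and let `G` be the group of permutations of `V` generated by
the gates. The key fact is that `G` contains the alternating group of `V`, and is the full symmetric
group when `1 ≤ N ≤ 3`; this is an application of Jordan's theorems on primitive groups.

* `G` is 2-transitive, hence primitive: `not` gates move any vector to `0`, and `c-not` gates, which
  fix `0`, move any nonzero vector to a fixed basis vector (`exists_normal_form`).
* For `A ⊆ Fin N` and `t ∉ A`, let `ctrlNot A t` negate wire `t` when all the wires in `A` are on.
  Given a spare wire `w`, the commutator of a `not` on `w` controlled by `A'` and a `not` on `t`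
  controlled by `{a, w}` is the `not` on `t` controlled by `A' ∪ {a}`. Hence every `ctrlNot A t`
  with at most `N - 2` controls lies in `G` (`ctrlNot_mem`).
* If `N ≥ 4`, two such permutations with `N - 2` controls can be chosen so that their supports
  meet in the all-ones vector only, and then their commutator is a 3-cycle.
* If `N ≤ 3`, the gate with `N - 1` controls is a transposition.

The partial injection `x · 0^n ↦ f(x) · x` extends to a permutation of `V`. When `n ≥ 1` and
`N ≥ 2`, at least two vectors lie outside its domain, so composing with a transposition of two of
them makes the extension even. When `n = 0` the identity works.
-/

/-- A (bijective) gate on `N` wires: a `not` gate, a controlled-not (`c-not`) gate, a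
doubly-controlled-not (`cc-not`, Toffoli) gate, or a wire transposition. -/
def IsGate {N : ℕ} (g : (Fin N → Bool) → (Fin N → Bool)) : Prop :=
  (∃ i : Fin N, g = fun v => Function.update v i (!(v i))) ∨
  (∃ i j : Fin N, i ≠ j ∧ g = fun v => Function.update v j (xor (v i) (v j))) ∨
  (∃ i j k : Fin N, i ≠ j ∧ i ≠ k ∧ j ≠ k ∧
    g = fun v => Function.update v k (xor (v i && v j) (v k))) ∨
  (∃ i j : Fin N, i ≠ j ∧ g = fun v => v ∘ Equiv.swap i j)

namespace Toffoli

open Equiv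

variable {N : ℕ}

/-- The permutation negating wire `t` exactly when all wires of `A` other than `t` are on.
Ignoring `t` itself as a control makes this an involution for every `A`. -/
def ctrlNot (A : Finset (Fin N)) (t : Fin N) : Perm (Fin N → Bool) :=
  Function.Involutive.toPerm
    (fun v => Function.update v t (xor (v t) (decide (∀ i ∈ A, i ≠ t → v i = true)))) <| by
    intro v
    have h : (∀ i ∈ A, i ≠ t → Function.update v t
        (xor (v t) (decide (∀ i ∈ A, i ≠ t → v i = true))) i = true) ↔
        (∀ i ∈ A, i ≠ t → v i = true) :=
      forall₃_congr fun i _ hi => by rw [Function.update_of_ne hi]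
    simp only [h, Function.update_self, Function.update_idem, Bool.xor_assoc, Bool.xor_self,
      Bool.xor_false, Function.update_eq_self]

theorem ctrlNot_apply (A : Finset (Fin N)) (t : Fin N) (v : Fin N → Bool) (k : Fin N) :
    ctrlNot A t v k =
      if k = t then xor (v t) (decide (∀ i ∈ A, i ≠ t → v i = true)) else v k := by
  change Function.update v t _ k = _
  rw [Function.update_apply]

theorem ctrlNot_involutive (A : Finset (Fin N)) (t : Fin N) (v : Fin N → Bool) :
    ctrlNot A t (ctrlNot A t v) = v :=
  (ctrlNot A t).symm_apply_apply v

theorem ctrlNot_inv (A : Finset (Fin N)) (t : Fin N) : (ctrlNot A t)⁻¹ = ctrlNot A t := rfl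

/-- The group generated by the gates on `N` wires. -/
def gateGroup (N : ℕ) : Subgroup (Perm (Fin N → Bool)) :=
  Subgroup.closure {g | IsGate (⇑g)}

theorem not_mem_group (t : Fin N) : ctrlNot ∅ t ∈ gateGroup N := by
  refine Subgroup.subset_closure (Or.inl ⟨t, ?_⟩)
  funext v k
  simp [ctrlNot_apply, Function.update_apply]

theorem cnot_mem_group {i t : Fin N} (h : i ≠ t) : ctrlNot {i} t ∈ gateGroup N := by
  refine Subgroup.subset_closure (Or.inr (Or.inl ⟨i, t, h, ?_⟩))
  funext v k
  simp [ctrlNot_apply, Function.update_apply, h, Bool.xor_comm]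

theorem ccnot_mem_group {i j t : Fin N} (hij : i ≠ j) (hi : i ≠ t) (hj : j ≠ t) :
    ctrlNot {i, j} t ∈ gateGroup N := by
  refine Subgroup.subset_closure (Or.inr (Or.inr (Or.inl ⟨i, j, t, hij, hi, hj, ?_⟩)))
  funext v k
  simp [ctrlNot_apply, Function.update_apply, hi, hj, Bool.xor_comm]

/-- The commutator identity which, given a spare wire `w`, adds one control to a gate. -/
theorem ctrlNot_insert {A : Finset (Fin N)} {a w t : Fin N} (hw : w ∉ A)
    (ht : t ∉ A) (haw : a ≠ w) (hat : a ≠ t) (hwt : w ≠ t) :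
    ctrlNot (insert a A) t =
      ctrlNot A w * ctrlNot {a, w} t * ctrlNot A w * ctrlNot {a, w} t := by
  -- the state of the controls in `A` is unaffected by changes on the wires `w` and `t`
  have key : ∀ u v : Fin N → Bool, (∀ k, k ≠ w → k ≠ t → u k = v k) →
      ((∀ i ∈ A, u i = true) ↔ (∀ i ∈ A, v i = true)) := fun u v h =>
    forall₂_congr fun i hi => by
      rw [h i (fun e => hw (e ▸ hi)) (fun e => ht (e ▸ hi))]
  have eA : ∀ s, s ∉ A → ∀ u : Fin N → Bool,
      (∀ i ∈ A, i ≠ s → u i = true) ↔ (∀ i ∈ A, u i = true) := fun s hs u =>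
    forall₂_congr fun i hi => by
      simp [show i ≠ s from fun e => hs (e ▸ hi)]
  ext v k
  have c1 : ∀ u : Fin N → Bool, (∀ k, k ≠ w → k ≠ t → u k = v k) → ∀ k, ctrlNot A w u k =
      if k = w then xor (u w) (decide (∀ i ∈ A, v i = true)) else u k := by
    intro u hu k
    rw [ctrlNot_apply]
    simp only [eA w hw, key u v hu]
  have c2 : ∀ u k, ctrlNot {a, w} t u k = if k = t then xor (u t) (u a && u w) else u k := by
    intro u k
    rw [ctrlNot_apply]
    simp [hat, hwt]
  have e1 := c1 (ctrlNot {a, w} t v) (by intro k _ h; simp [c2, h])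
  have e2 := c1 (ctrlNot {a, w} t (ctrlNot A w (ctrlNot {a, w} t v)))
    (by intro k h h'; simp [c2, e1, h, h'])
  simp only [Perm.mul_apply]
  rw [ctrlNot_apply, e2]
  simp only [c2, e1, Finset.forall_mem_insert, eA t ht, ne_eq, hat, not_false_eq_true,
    forall_const, Bool.decide_and, Bool.decide_eq_true]
  generalize decide (∀ i ∈ A, v i = true) = P
  by_cases h1 : k = t
  · subst h1
    simp only [if_true, hwt, hwt.symm, haw, if_false]
    cases P <;> cases v a <;> cases v w <;> cases v k <;> rfl
  · by_cases h2 : k = w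
    · subst h2
      simp [hwt]
    · simp [h1, h2]

/-- Every multiply-controlled `not` leaving a wire `w` unused is generated by the gates. -/
theorem ctrlNot_mem (A : Finset (Fin N)) : ∀ t w : Fin N, t ∉ A → w ∉ A → w ≠ t →
    ctrlNot A t ∈ gateGroup N := by
  induction A using Finset.induction_on with
  | empty => exact fun t _ _ _ _ => not_mem_group t
  | insert a A ha ih =>
    intro t w ht hw hwt
    simp only [Finset.mem_insert, not_or] at ht hw
    have haw : a ≠ w := fun e => hw.1 e.symm
    have hat : a ≠ t := fun e => ht.1 e.symm
    rw [ctrlNot_insert hw.2 ht.2 haw hat hwt]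
    have h1 := ih w a hw.2 ha haw
    have h2 := ccnot_mem_group haw hat hwt
    exact mul_mem (mul_mem (mul_mem h1 h2) h1) h2

/-- Negating all wires of `S` at once, under the control of a set `A` disjoint from `S`. -/
theorem exists_wide {A : Finset (Fin N)} (hA : ∀ t ∉ A, ctrlNot A t ∈ gateGroup N)
    (S : Finset (Fin N)) : (∀ k ∈ S, k ∉ A) → ∃ g ∈ gateGroup N, ∀ v k,
      g v k = xor (v k) (decide (k ∈ S) && decide (∀ i ∈ A, v i = true)) := by
  induction S using Finset.induction_on with
  | empty => exact fun _ => ⟨1, one_mem _, by simp⟩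
  | insert t S ht ih =>
    intro h
    obtain ⟨g, hg, hgv⟩ := ih fun k hk => h k (Finset.mem_insert_of_mem hk)
    have htA := h t (Finset.mem_insert_self t S)
    refine ⟨g * ctrlNot A t, mul_mem hg (hA t htA), fun v k => ?_⟩
    have e1 : (∀ i ∈ A, i ≠ t → v i = true) ↔ (∀ i ∈ A, v i = true) :=
      forall₂_congr fun i hi => by simp [show i ≠ t from fun e => htA (e ▸ hi)]
    have e2 : (∀ i ∈ A, ctrlNot A t v i = true) ↔ (∀ i ∈ A, v i = true) :=
      forall₂_congr fun i hi => by
        simp [ctrlNot_apply, show i ≠ t from fun e => htA (e ▸ hi)]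
    rw [Perm.mul_apply, hgv, ctrlNot_apply]
    simp only [e1, e2]
    by_cases hk : k = t
    · subst hk; simp [ht]
    · simp [hk]

/-- 2-transitivity in normal form: every pair of distinct vectors can be moved to the zero vector
and the basis vector at `i₀`. -/
theorem exists_normal_form (i₀ : Fin N) {a b : Fin N → Bool} (hab : a ≠ b) :
    ∃ g ∈ gateGroup N, g a = (fun _ => false) ∧ g b = fun k => decide (k = i₀) := by
  have hc : ∀ i : Fin N, ∀ t ∉ ({i} : Finset (Fin N)), ctrlNot {i} t ∈ gateGroup N :=
    fun i t ht => cnot_mem_group fun e => ht (by simp [e])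
  obtain ⟨g₁, hg₁, h₁⟩ := exists_wide (A := ∅) (fun t _ => not_mem_group t)
    (Finset.univ.filter fun k => a k = true) (by simp)
  have ha : g₁ a = fun _ => false := by funext k; rw [h₁]; simp
  have hb : g₁ b ≠ fun _ => false := fun e => hab (g₁.injective (ha.trans e.symm))
  set c := g₁ b with hcb
  -- linear step: a nonzero vector is moved to one with coordinate `i₀` on
  obtain ⟨g₂, hg₂, h₂, h₂'⟩ : ∃ g ∈ gateGroup N, g (fun _ => false) = (fun _ => false) ∧
      g c i₀ = true := by
    by_cases h : c i₀ = true
    · exact ⟨1, one_mem _, rfl, h⟩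
    · obtain ⟨i, hi⟩ : ∃ i, c i = true := by
        by_contra! hn
        exact hb (funext fun k => by simpa using hn k)
      have hne : i ≠ i₀ := fun e => h (e ▸ hi)
      refine ⟨_, cnot_mem_group hne, ?_, ?_⟩
      · funext k; simp [ctrlNot_apply, hne]
      · simp [ctrlNot_apply, hne, hi, h]
  -- the other coordinates are cleared by `c-not` gates controlled by `i₀`
  obtain ⟨g₃, hg₃, h₃⟩ := exists_wide (hc i₀)
    (Finset.univ.filter fun k => k ≠ i₀ ∧ g₂ c k = true) (by simp +contextual)
  refine ⟨g₃ * g₂ * g₁, mul_mem (mul_mem hg₃ hg₂) hg₁, ?_, ?_⟩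
  · rw [Perm.mul_apply, Perm.mul_apply, ha, h₂]
    funext k; rw [h₃]; simp
  · rw [Perm.mul_apply, Perm.mul_apply, ← hcb]
    funext k; rw [h₃]
    by_cases hk : k = i₀
    · subst hk; simp [h₂']
    · simp [hk, h₂']

theorem gateGroup_isPreprimitive (i₀ : Fin N) :
    MulAction.IsPreprimitive (gateGroup N) (Fin N → Bool) := by
  apply MulAction.isPreprimitive_of_is_two_pretransitive
  rw [MulAction.is_two_pretransitive_iff]
  intro a b c d hab hcd
  obtain ⟨g, hg, hga, hgb⟩ := exists_normal_form i₀ hab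
  obtain ⟨h, hh, hhc, hhd⟩ := exists_normal_form i₀ hcd
  refine ⟨⟨h⁻¹ * g, mul_mem (inv_mem hh) hg⟩, ?_, ?_⟩
  · change h⁻¹ (g a) = c
    rw [hga, ← hhc]; exact h.symm_apply_apply c
  · change h⁻¹ (g b) = d
    rw [hgb, ← hhd]; exact h.symm_apply_apply d

/-- With every other wire as a control, only the all-ones vector and its neighbour along `t`
move. -/
theorem ctrlNot_isSwap {A : Finset (Fin N)} {t : Fin N} (hA : ∀ i, i ≠ t → i ∈ A) :
    (ctrlNot A t).IsSwap := by
  refine ⟨fun _ => true, Function.update (fun _ => true) t false, ?_, ?_⟩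
  · intro e
    simpa using congrFun e t
  · have hiff : ∀ v : Fin N → Bool, (∀ i ∈ A, i ≠ t → v i = true) ↔ ∀ i, i ≠ t → v i = true :=
      fun v => ⟨fun h i hi => h i (hA i hi) hi, fun h i _ hi => h i hi⟩
    ext v k
    rw [ctrlNot_apply, swap_apply_def]
    simp only [hiff]
    split_ifs with h1 h2 h3 h4 h5
    all_goals try subst h1
    · subst h2; simp
    · subst h3; simp +contextual
    · have : ¬ ∀ i, i ≠ k → v i = true := by
        intro h
        cases hv : v k with
        | true => exact h2 (funext fun i => by
            by_cases e : i = k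
            · rw [e, hv]
            · exact h i e)
        | false => exact h3 (funext fun i => by
            by_cases e : i = k
            · rw [e, hv]; simp
            · rw [h i e]; simp [e])
      simp [this]
    · subst h4; simp [h1]
    · subst h5; simp [h1]
    · rfl

/-- Two involutions whose supports meet in a single point have a 3-cycle as their commutator. -/
theorem isThreeCycle_of_support_inter {α : Type*} [Fintype α] [DecidableEq α] {σ τ : Perm α}
    (hσ : ∀ x, σ (σ x) = x) (hτ : ∀ x, τ (τ x) = x) {p : α} (hσp : σ p ≠ p) (hτp : τ p ≠ p)
    (h : ∀ x, σ x ≠ x → τ x ≠ x → x = p) : (σ * τ * σ * τ).IsThreeCycle := by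
  have h1 : τ (σ p) = σ p := by
    by_contra hne
    exact hσp (h _ (by rw [hσ]; exact hσp.symm) hne)
  have h2 : σ (τ p) = τ p := by
    by_contra hne
    exact hτp (h _ hne (by rw [hτ]; exact hτp.symm))
  have h3 : σ p ≠ τ p := by
    intro e
    rw [← e, hσ] at h2
    exact hσp h2.symm
  have : σ * τ * σ * τ = swap p (τ p) * swap p (σ p) := by
    ext x
    simp only [Perm.mul_apply]
    by_cases hxp : x = p
    · subst hxp
      rw [h2, hτ, swap_apply_left, swap_apply_of_ne_of_ne hσp h3]
    by_cases hxq : x = σ p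
    · subst hxq
      rw [h1, hσ, h2, swap_apply_right, swap_apply_left]
    by_cases hxr : x = τ p
    · subst hxr
      rw [hτ, h1, hσ, swap_apply_of_ne_of_ne hτp h3.symm, swap_apply_right]
    rw [swap_apply_of_ne_of_ne hxp hxq, swap_apply_of_ne_of_ne hxp hxr]
    by_cases hs : σ x = x
    · have : σ (τ x) = τ x := by
        by_contra hne
        by_cases ht : τ x = x
        · rw [ht] at hne; exact hne hs
        · have := h _ hne (by rw [hτ]; exact fun e => ht e.symm)
          exact hxr (by rw [← this, hτ])
      rw [this, hτ, hs]
    · have ht : τ x = x := by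
        by_contra hne
        exact hxp (h x hs hne)
      have : τ (σ x) = σ x := by
        by_contra hne
        have := h _ (by rw [hσ]; exact fun e => hs e.symm) hne
        exact hxq (by rw [← this, hσ])
      rw [ht, this, hσ]
  rw [this]
  exact Perm.isThreeCycle_swap_mul_swap_same hτp.symm hσp.symm h3.symm

theorem eq_top_of_isSwap {A : Finset (Fin N)} {t : Fin N} (hA : ∀ i, i ≠ t → i ∈ A)
    (h : ctrlNot A t ∈ gateGroup N) : gateGroup N = ⊤ :=
  Perm.subgroup_eq_top_of_isPreprimitive_of_isSwap_mem (gateGroup_isPreprimitive t) _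
    (ctrlNot_isSwap hA) h

theorem gateGroup_eq_top (h0 : N ≠ 0) (h : N < 4) : gateGroup N = ⊤ := by
  interval_cases N
  · exact absurd rfl h0
  · exact eq_top_of_isSwap (t := 0) (by decide) (not_mem_group 0)
  · exact eq_top_of_isSwap (t := 0) (by decide) (cnot_mem_group (i := 1) (by decide))
  · exact eq_top_of_isSwap (t := 0) (by decide)
      (ccnot_mem_group (i := 1) (j := 2) (by decide) (by decide) (by decide))

theorem alternatingGroup_le (h : 4 ≤ N) : alternatingGroup (Fin N → Bool) ≤ gateGroup N := by
  -- targets `t`, `s` and unused wires `w`, `z`, pairwise distinct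
  let t : Fin N := ⟨0, by omega⟩
  let s : Fin N := ⟨1, by omega⟩
  let w : Fin N := ⟨2, by omega⟩
  let z : Fin N := ⟨3, by omega⟩
  have hts : t ≠ s := by simp [t, s]
  have htw : t ≠ w := by simp [t, w]
  have htz : t ≠ z := by simp [t, z]
  have hsw : s ≠ w := by simp [s, w]
  have hsz : s ≠ z := by simp [s, z]
  have hwz : w ≠ z := by simp [w, z]
  let A : Finset (Fin N) := Finset.univ.filter fun i => i ≠ t ∧ i ≠ w
  let B : Finset (Fin N) := Finset.univ.filter fun i => i ≠ s ∧ i ≠ z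
  have hA : ctrlNot A t ∈ gateGroup N := ctrlNot_mem A t w (by simp [A]) (by simp [A]) htw.symm
  have hB : ctrlNot B s ∈ gateGroup N := ctrlNot_mem B s z (by simp [B]) (by simp [B]) hsz.symm
  have moved : ∀ (C : Finset (Fin N)) r v, ctrlNot C r v ≠ v → ∀ i ∈ C, i ≠ r → v i = true := by
    intro C r v hne
    by_contra hn
    refine hne (funext fun k => ?_)
    rw [ctrlNot_apply]
    split_ifs with hk
    · subst hk; simp only [hn, decide_false, Bool.xor_false]
    · rfl
  have ones : ∀ (C : Finset (Fin N)) r, ctrlNot C r (fun _ => true) ≠ fun _ => true := by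
    intro C r e
    simpa [ctrlNot_apply] using congrFun e r
  refine Perm.alternatingGroup_le_of_isPreprimitive_of_isThreeCycle_mem (gateGroup_isPreprimitive t)
    (isThreeCycle_of_support_inter (ctrlNot_involutive A t) (ctrlNot_involutive B s)
      (ones A t) (ones B s) ?_) (mul_mem (mul_mem (mul_mem hA hB) hA) hB)
  intro v h1 h2
  funext i
  by_cases hi : i ≠ t ∧ i ≠ w
  · exact moved A t v h1 i (by simp [A, hi]) hi.1
  · have : i ≠ s ∧ i ≠ z := by
      rcases not_and_or.mp hi with e | e <;> rw [not_not] at e <;> subst e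
      · exact ⟨hts, htz⟩
      · exact ⟨hsw.symm, hwz⟩
    exact moved B s v h2 i (by simp [B, this]) this.1

theorem exists_list {π : Perm (Fin N → Bool)} (h : π ∈ gateGroup N) :
    ∃ L : List (Perm (Fin N → Bool)), (∀ g ∈ L, IsGate (⇑g)) ∧ L.prod = π := by
  -- in a finite group, the submonoid generated by a set is already a subgroup
  rw [gateGroup, ← Subgroup.mem_toSubmonoid, Subgroup.closure_toSubmonoid_of_finite] at h
  exact Submonoid.exists_list_of_mem_closure h

end Toffoli

/-- Toffoli representation: every boolean function `f : {0,1}^m → {0,1}^n` is computed by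
a composition `π` of bijective gates (permutations of `{0,1}^(m+n)`) in the sense that
`π (x · 0^n) = f(x) · x` for every `x ∈ {0,1}^m`. -/
theorem toffoli_representation (m n : ℕ) (f : (Fin m → Bool) → (Fin n → Bool)) :
    ∃ L : List (Equiv.Perm (Fin (m + n) → Bool)),
      (∀ g ∈ L, IsGate (⇑g)) ∧
      ∀ x : Fin m → Bool,
        (L.prod : Equiv.Perm (Fin (m + n) → Bool))
            (Fin.append x (fun _ : Fin n => false)) =
          (Fin.append (f x) x) ∘ Fin.cast (Nat.add_comm m n) := by
  rcases Nat.eq_zero_or_pos n with rfl | hn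
  · refine ⟨[], by simp, fun x => ?_⟩
    rw [Fin.append_right_nil _ _ rfl, Fin.append_left_nil _ _ rfl]
    rfl
  suffices H : ∃ π ∈ Toffoli.gateGroup (m + n), ∀ x : Fin m → Bool,
      π (Fin.append x (fun _ : Fin n => false)) =
        (Fin.append (f x) x) ∘ Fin.cast (Nat.add_comm m n) by
    obtain ⟨π, hπ, h⟩ := H
    obtain ⟨L, hL, rfl⟩ := Toffoli.exists_list hπ
    exact ⟨L, hL, h⟩
  obtain ⟨σ, hσ⟩ := Equiv.Perm.exists_extending_pair
    (fun x : Fin m → Bool => Fin.append x (fun _ : Fin n => false))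
    (fun x => (Fin.append (f x) x) ∘ Fin.cast (Nat.add_comm m n))
    (fun x y h => funext fun i => by simpa using congrFun h (Fin.castAdd n i))
    (fun x y h => funext fun i => by
      simpa using congrFun h (Fin.cast (Nat.add_comm n m) (Fin.natAdd n i)))
  rcases Nat.lt_or_ge (m + n) 4 with h4 | h4
  · exact ⟨σ, by rw [Toffoli.gateGroup_eq_top (by omega) h4]; trivial, hσ⟩
  have hle := Toffoli.alternatingGroup_le h4
  rcases Int.units_eq_one_or (Equiv.Perm.sign σ) with hs | hs
  · exact ⟨σ, hle (Equiv.Perm.mem_alternatingGroup.mpr hs), hσ⟩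
  -- two vectors outside the domain: both are on at the output wire `j`, and they differ at `i`
  let j : Fin (m + n) := Fin.natAdd m ⟨0, hn⟩
  have : Nontrivial (Fin (m + n)) := Fin.nontrivial_iff_two_le.mpr (by omega)
  obtain ⟨i, hij⟩ := exists_ne j
  let p : Fin (m + n) → Bool := fun _ => true
  let q : Fin (m + n) → Bool := Function.update p i false
  have hpq : p ≠ q := fun e => by simpa [p, q] using congrFun e i
  have out : ∀ v : Fin (m + n) → Bool, v j = true → ∀ x : Fin m → Bool,
      Fin.append x (fun _ : Fin n => false) ≠ v := by
    intro v hv x e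
    rw [← e, Fin.append_right] at hv
    exact Bool.false_ne_true hv
  refine ⟨σ * Equiv.swap p q, hle (Equiv.Perm.mem_alternatingGroup.mpr ?_), fun x => ?_⟩
  · rw [map_mul, hs, Equiv.Perm.sign_swap hpq]; rfl
  · rw [Equiv.Perm.mul_apply, Equiv.swap_apply_of_ne_of_ne (out p rfl x)
      (out q (by simp [q, p, hij.symm]) x)]
    exact hσ x
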